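/- arXiv:0709.2638 — 3 statements merged into one kernel-verified Lean document; each statement's English description precedes it below -/
import Mathlib

section
/- Let u be a non-degenerate 3iet word with parameters ε, l, c. Then u is a fixed point of some primitive substitution over {1,2,3} if and only if there exists ν ∈ (0,1) such that, with J := [νc, ν(c+l)): (P1) every x ∈ J returns to J under T (there is n ≥ 1 with Tⁿ(x) ∈ J) and, denoting by r(x) the least such n, T^{r(x)}(x) = ν·T(x/ν) for all x ∈ J; and (P2) the set of return names {w(z) : z ∈ J} has exactly three elements, where the return name of z ∈ J is the finite word w(z) = v₀v₁⋯v_{r(z)−1} over {1,2,3} with v_i = 1, 2 or 3 according as T^i(z) ∈ [c, c+l−1+ε), [c+l−1+ε, c+ε) or [c+ε, c+l). -/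
/-- The set `ℤ[ε] = {a + bε : a, b ∈ ℤ}`. -/
def Zbr (ε : ℝ) : Set ℝ := {x | ∃ a b : ℤ, x = (a : ℝ) + (b : ℝ) * ε}

/-- The exchange of three intervals on `[c, c+l)` with parameters `ε, l, c`. -/
noncomputable def T3 (ε l c : ℝ) (x : ℝ) : ℝ :=
  if x < c + l - 1 + ε then x + 1 - ε
  else if x < c + ε then x + 1 - 2 * ε
  else x - ε

/-- The letter (1, 2 or 3, coded as 0, 1, 2 in `Fin 3`) coding the position of `x`. -/
noncomputable def letter3 (ε l c : ℝ) (x : ℝ) : Fin 3 :=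
  if x < c + l - 1 + ε then 0 else if x < c + ε then 1 else 2

/-- `u : ℤ → Fin 3` is the 3iet word with parameters `ε, l, c`, coding the orbit of `0`. -/
def IsThreeIetWord (ε l c : ℝ) (u : ℤ → Fin 3) : Prop :=
  ∃ t : ℤ → ℝ, t 0 = 0 ∧ (∀ n, t n ∈ Set.Ico c (c + l)) ∧
    (∀ n, t (n + 1) = T3 ε l c (t n)) ∧ ∀ n, u n = letter3 ε l c (t n)

/-- The extension of a substitution `φ` to finite words, by concatenation. -/
def substWord {A : Type*} (φ : A → List A) (w : List A) : List A := w.flatMap φ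

/-- A substitution is primitive if some power of it maps every letter to a word
containing all letters. -/
def IsPrimitiveSubst {A : Type*} (φ : A → List A) : Prop :=
  ∃ n : ℕ, 1 ≤ n ∧ ∀ a b : A, b ∈ (substWord φ)^[n] [a]

/-- A pointed bidirectional word `u : ℤ → A` is a fixed point of the substitution `φ`. -/
def IsFixedPointSubstZ {A : Type*} (φ : A → List A) (u : ℤ → A) : Prop :=
  ∃ k : ℤ → ℤ, StrictMono k ∧ k 0 = 0 ∧
    (∀ n, k (n + 1) = k n + (φ (u n)).length) ∧
    ∀ n : ℤ, ∀ i : ℕ, (h : i < (φ (u n)).length) → u (k n + i) = (φ (u n)).get ⟨i, h⟩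

/-- The set of return names of points of `J` under the 3iet `T3 ε l c`. -/
noncomputable def returnNames (ε l c : ℝ) (J : Set ℝ) : Set (List (Fin 3)) :=
  {w | ∃ z ∈ J, ∃ r : ℕ, 1 ≤ r ∧ (T3 ε l c)^[r] z ∈ J ∧
    (∀ m : ℕ, 1 ≤ m → m < r → (T3 ε l c)^[m] z ∉ J) ∧
    w = List.ofFn (fun i : Fin r => letter3 ε l c ((T3 ε l c)^[(i : ℕ)] z))}

open Filter Topology Set

structure Par (ε l c : ℝ) : Prop where
  irr : Irrational ε
  e0 : 0 < ε
  e1 : ε < 1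
  h1 : ε < l
  h2 : 1 - ε < l
  h3 : l < 1
  c0 : c ≤ 0
  c1 : 0 < c + l
  nd : l ∉ Zbr ε

noncomputable def stp (ε : ℝ) : Fin 3 → ℝ := ![1 - ε, 1 - 2 * ε, -ε]

theorem T3_eq (ε l c x : ℝ) : T3 ε l c x = x + stp ε (letter3 ε l c x) := by
  unfold T3 letter3
  split_ifs <;> simp [stp] <;> ring

theorem letter_zero {ε l c x : ℝ} : letter3 ε l c x = 0 ↔ x < c + l - 1 + ε := by
  unfold letter3
  split_ifs <;> simp_all

theorem letter_one {ε l c x : ℝ} :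
    letter3 ε l c x = 1 ↔ c + l - 1 + ε ≤ x ∧ x < c + ε := by
  unfold letter3
  split_ifs <;> simp_all

theorem letter_two {ε l c x : ℝ} :
    letter3 ε l c x = 2 ↔ c + l - 1 + ε ≤ x ∧ c + ε ≤ x := by
  unfold letter3
  split_ifs <;> simp_all

theorem letter_cases (ε l c x : ℝ) :
    (letter3 ε l c x = 0 ∧ x < c + l - 1 + ε ∧ T3 ε l c x = x + 1 - ε) ∨
    (letter3 ε l c x = 1 ∧ c + l - 1 + ε ≤ x ∧ x < c + ε ∧ T3 ε l c x = x + 1 - 2 * ε) ∨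
    (letter3 ε l c x = 2 ∧ c + l - 1 + ε ≤ x ∧ c + ε ≤ x ∧ T3 ε l c x = x - ε) := by
  unfold letter3 T3
  split_ifs <;> simp_all

theorem Zinj {ε : ℝ} (h : Irrational ε) (a b : ℤ) (hab : (a : ℝ) + b * ε = 0) :
    a = 0 ∧ b = 0 := by
  have hb : b = 0 := by
    by_contra hb
    apply h
    refine ⟨(-a : ℚ) / b, ?_⟩
    have : (b : ℝ) ≠ 0 := by exact_mod_cast hb
    push_cast
    field_simp
    linarith
  subst hb
  simp at hab
  exact ⟨by exact_mod_cast hab, rfl⟩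

theorem T3_mem {ε l c : ℝ} (P : Par ε l c) {x : ℝ} (hx : x ∈ Ico c (c + l)) :
    T3 ε l c x ∈ Ico c (c + l) := by
  obtain ⟨h1, h2⟩ := hx
  have := P.e0; have := P.e1; have := P.h1; have := P.h2; have := P.h3
  rcases letter_cases ε l c x with ⟨_, h, e⟩ | ⟨_, h, h', e⟩ | ⟨_, h, h', e⟩ <;> rw [e] <;>
    constructor <;> linarith

theorem T3_inj {ε l c : ℝ} (P : Par ε l c) {x y : ℝ} (hx : x ∈ Ico c (c + l))
    (hy : y ∈ Ico c (c + l)) (H : T3 ε l c x = T3 ε l c y) : x = y := by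
  obtain ⟨h1, h2⟩ := hx
  obtain ⟨h3, h4⟩ := hy
  have := P.e0; have := P.e1; have := P.h1; have := P.h2; have := P.h3
  rcases letter_cases ε l c x with ⟨_, h, e⟩ | ⟨_, h, h', e⟩ | ⟨_, h, h', e⟩ <;>
  rcases letter_cases ε l c y with ⟨_, g, e'⟩ | ⟨_, g, g', e'⟩ | ⟨_, g, g', e'⟩ <;>
    rw [e, e'] at H <;> linarith

theorem T3_surj {ε l c : ℝ} (P : Par ε l c) {y : ℝ}
    (hy : y ∈ Ico c (c + l)) : ∃ x ∈ Ico c (c + l), T3 ε l c x = y := by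
  obtain ⟨h3, h4⟩ := hy
  have := P.e0; have := P.e1; have := P.h1; have := P.h2; have := P.h3
  by_cases ha : y < c + l - ε
  · refine ⟨y + ε, ⟨by linarith, by linarith⟩, ?_⟩
    rcases letter_cases ε l c (y + ε) with ⟨_, h, e⟩ | ⟨_, h, h', e⟩ | ⟨_, h, h', e⟩ <;> rw [e] <;>
      linarith
  · by_cases hb : y < c + 1 - ε
    · refine ⟨y - 1 + 2 * ε, ⟨by linarith, by linarith⟩, ?_⟩
      rcases letter_cases ε l c (y - 1 + 2 * ε) with ⟨_, h, e⟩ | ⟨_, h, h', e⟩ | ⟨_, h, h', e⟩ <;>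
        rw [e] <;> linarith
    · refine ⟨y - 1 + ε, ⟨by linarith, by linarith⟩, ?_⟩
      rcases letter_cases ε l c (y - 1 + ε) with ⟨_, h, e⟩ | ⟨_, h, h', e⟩ | ⟨_, h, h', e⟩ <;>
        rw [e] <;> linarith

theorem iter_mem {ε l c : ℝ} (P : Par ε l c) {x : ℝ} (hx : x ∈ Ico c (c + l)) (n : ℕ) :
    (T3 ε l c)^[n] x ∈ Ico c (c + l) := by
  induction n with
  | zero => simpa using hx
  | succ n ih => rw [Function.iterate_succ_apply']; exact T3_mem P ih

theorem iter_inj {ε l c : ℝ} (P : Par ε l c) {x y : ℝ} (hx : x ∈ Ico c (c + l))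
    (hy : y ∈ Ico c (c + l)) (n : ℕ) (h : (T3 ε l c)^[n] x = (T3 ε l c)^[n] y) : x = y := by
  induction n with
  | zero => simpa using h
  | succ n ih =>
    rw [Function.iterate_succ_apply', Function.iterate_succ_apply'] at h
    exact ih (T3_inj P (iter_mem P hx n) (iter_mem P hy n) h)

theorem iter_surj {ε l c : ℝ} (P : Par ε l c) {y : ℝ}
    (hy : y ∈ Ico c (c + l)) (n : ℕ) : ∃ x ∈ Ico c (c + l), (T3 ε l c)^[n] x = y := by
  induction n with
  | zero => exact ⟨y, hy, rfl⟩
  | succ n ih =>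
    obtain ⟨x, hx, e⟩ := ih
    obtain ⟨z, hz, e'⟩ := T3_surj P hx
    exact ⟨z, hz, by rw [Function.iterate_succ_apply, e', e]⟩

theorem iter_form (ε l c : ℝ) (n : ℕ) (x : ℝ) : ∃ A B : ℤ,
    (T3 ε l c)^[n] x = x + A - B * ε ∧ (n : ℤ) ≤ B ∧ B ≤ 2 * n ∧ 0 ≤ A ∧ A ≤ n := by
  induction n with
  | zero => exact ⟨0, 0, by simp, by simp, by simp, by simp, by simp⟩
  | succ n ih =>
    obtain ⟨A, B, e, h1, h2, h3, h4⟩ := ih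
    rw [Function.iterate_succ_apply']
    rcases letter_cases ε l c ((T3 ε l c)^[n] x) with ⟨_, h, e'⟩ | ⟨_, h, h', e'⟩ | ⟨_, h, h', e'⟩
    · exact ⟨A + 1, B + 1, by rw [e', e]; push_cast; ring, by omega, by omega, by omega, by omega⟩
    · exact ⟨A + 1, B + 2, by rw [e', e]; push_cast; ring, by omega, by omega, by omega, by omega⟩
    · exact ⟨A, B + 1, by rw [e', e]; push_cast; ring, by omega, by omega, by omega, by omega⟩

theorem iter_ne {ε l c : ℝ} (P : Par ε l c) {n : ℕ} (hn : 1 ≤ n) (x : ℝ) :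
    (T3 ε l c)^[n] x ≠ x := by
  intro h
  obtain ⟨A, B, e, h1, h2, h3, h4⟩ := iter_form ε l c n x
  have := (Zinj P.irr A (-B) (by push_cast; linarith)).2
  omega

theorem iter_time_inj {ε l c : ℝ} (P : Par ε l c) {n m : ℕ} (x : ℝ)
    (h : (T3 ε l c)^[n] x = (T3 ε l c)^[m] x) : n = m := by
  wlog hnm : n ≤ m generalizing n m
  · exact (this h.symm (by omega)).symm
  by_contra hne
  obtain ⟨d, rfl⟩ := Nat.exists_eq_add_of_le hnm
  rw [add_comm, Function.iterate_add_apply] at h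
  exact iter_ne P (show 1 ≤ d by omega) _ h.symm

theorem iter_gap {ε l c : ℝ} (P : Par ε l c) (N : ℕ) : ∃ δ > 0, ∀ x : ℝ, ∀ m : ℕ,
    1 ≤ m → m ≤ N → δ ≤ |(T3 ε l c)^[m] x - x| := by
  let F : Set ℝ := (fun ab : ℤ × ℤ => (ab.1 : ℝ) - ab.2 * ε) ''
    (Icc (0 : ℤ) N ×ˢ Icc (1 : ℤ) (2 * N))
  have hF : F.Finite := Set.Finite.image _ ((Set.finite_Icc _ _).prod (Set.finite_Icc _ _))
  have h0 : (0 : ℝ) ∉ F := by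
    rintro ⟨⟨a, b⟩, ⟨-, hb⟩, h⟩
    have := (Zinj P.irr a (-b) (by push_cast; simp at h; linarith)).2
    simp at hb
    omega
  have := hF.isClosed.isOpen_compl.mem_nhds h0
  obtain ⟨δ, hδ, hb⟩ := Metric.mem_nhds_iff.1 this
  refine ⟨δ, hδ, fun x m h1 h2 => ?_⟩
  obtain ⟨A, B, e, g1, g2, g3, g4⟩ := iter_form ε l c m x
  by_contra hlt
  push Not at hlt
  have : (T3 ε l c)^[m] x - x ∈ Metric.ball (0 : ℝ) δ := by simpa using hlt
  refine hb this ⟨(A, B), ⟨?_, ?_⟩, ?_⟩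
  · simp; omega
  · simp; omega
  · simp [e]; ring

theorem rot_hit {ε l c : ℝ} (P : Par ε l c) (n : ℕ) : ∀ x ∈ Ico c (c + l), ∀ a : ℤ,
    x - n * ε + a ∈ Ico c (c + l) → ∃ m ≤ n, (T3 ε l c)^[m] x = x - n * ε + a := by
  have := P.e0; have := P.e1; have := P.h1; have := P.h2; have := P.h3
  induction n using Nat.strong_induction_on with
  | _ n ih =>
  intro x hx a ha
  rcases n with _ | _ | n
  · have h1 : (a : ℝ) < 1 := by have := hx.1; have := ha.2; simp at *; linarith
    have h2 : (-1 : ℝ) < a := by have := hx.2; have := ha.1; simp at *; linarith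
    have h1' : a < 1 := by exact_mod_cast h1
    have h2' : -1 < a := by exact_mod_cast h2
    have : a = 0 := by omega
    exact ⟨0, le_rfl, by simp [this]⟩
  · obtain ⟨ha1, ha2⟩ := ha
    obtain ⟨hx1, hx2⟩ := hx
    push_cast at ha1 ha2
    rcases letter_cases ε l c x with ⟨_, h, e⟩ | ⟨_, h, h', e⟩ | ⟨_, h, h', e⟩
    · obtain ⟨m, hm, e'⟩ := ih 0 (by omega) (T3 ε l c x) (T3_mem P ⟨hx1, hx2⟩) (a - 1) (by
        rw [e]; push_cast; constructor <;> linarith)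
      exact ⟨m + 1, by omega, by rw [Function.iterate_succ_apply, e', e]; push_cast; ring⟩
    · exfalso
      have h1 : (0 : ℝ) < a := by linarith
      have h2 : (a : ℝ) < 1 := by linarith
      have h1' : 0 < a := by exact_mod_cast h1
      have h2' : a < 1 := by exact_mod_cast h2
      omega
    · obtain ⟨m, hm, e'⟩ := ih 0 (by omega) (T3 ε l c x) (T3_mem P ⟨hx1, hx2⟩) a (by
        rw [e]; push_cast; constructor <;> linarith)
      exact ⟨m + 1, by omega, by rw [Function.iterate_succ_apply, e', e]; push_cast; ring⟩
  · obtain ⟨ha1, ha2⟩ := ha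
    push_cast at ha1 ha2
    rcases letter_cases ε l c x with ⟨_, h, e⟩ | ⟨_, h, h', e⟩ | ⟨_, h, h', e⟩
    · obtain ⟨m, hm, e'⟩ := ih (n + 1) (by omega) (T3 ε l c x) (T3_mem P hx) (a - 1) (by
        rw [e]; push_cast; constructor <;> linarith)
      exact ⟨m + 1, by omega, by rw [Function.iterate_succ_apply, e', e]; push_cast; ring⟩
    · obtain ⟨m, hm, e'⟩ := ih n (by omega) (T3 ε l c x) (T3_mem P hx) (a - 1) (by
        rw [e]; push_cast; constructor <;> linarith)
      exact ⟨m + 1, by omega, by rw [Function.iterate_succ_apply, e', e]; push_cast; ring⟩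
    · obtain ⟨m, hm, e'⟩ := ih (n + 1) (by omega) (T3 ε l c x) (T3_mem P hx) a (by
        rw [e]; push_cast; constructor <;> linarith)
      exact ⟨m + 1, by omega, by rw [Function.iterate_succ_apply, e', e]; push_cast; ring⟩

theorem dirichlet {ε : ℝ} (h : Irrational ε) {η : ℝ} (hη : 0 < η) : ∃ (k : ℕ) (j : ℤ),
    (j : ℝ) - k * ε ≠ 0 ∧ |(j : ℝ) - k * ε| < η := by
  obtain ⟨n, hn⟩ := exists_nat_one_div_lt hη
  obtain ⟨j, k, hk, -, hh⟩ := Real.exists_int_int_abs_mul_sub_le ε (Nat.succ_pos n)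
  lift k to ℕ using hk.le
  refine ⟨k, j, ?_, ?_⟩
  · intro h0
    have := (Zinj h j (-k) (by push_cast; linarith)).2
    omega
  · rw [abs_sub_comm]
    push_cast at hh
    refine lt_of_le_of_lt hh (lt_of_le_of_lt ?_ hn)
    apply one_div_le_one_div_of_le
    · positivity
    · linarith

theorem unif_min {ε l c : ℝ} (P : Par ε l c) {α β : ℝ} (hαβ : α < β) (hα : c ≤ α)
    (hβ : β ≤ c + l) : ∃ N : ℕ, ∀ x ∈ Ico c (c + l), ∃ m ≤ N, (T3 ε l c)^[m] x ∈ Ioo α β := by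
  obtain ⟨k, j, h0, hs⟩ := dirichlet P.irr (sub_pos.2 hαβ)
  set s : ℝ := (j : ℝ) - k * ε with hsdef
  have hpos : 0 < |s| := abs_pos.2 h0
  suffices H : ∀ x : ℝ, ∃ (a : ℤ) (i : ℕ), i ≤ ⌊1 / |s|⌋₊ + 1 ∧ x + a + i * s ∈ Ioo α β by
    refine ⟨(⌊1 / |s|⌋₊ + 1) * k, fun x hx => ?_⟩
    obtain ⟨a, i, hi, hm⟩ := H x
    have e : x + a + i * s = x - ((i * k : ℕ) : ℝ) * ε + ((a + i * j : ℤ) : ℝ) := by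
      rw [hsdef]; push_cast; ring
    rw [e] at hm
    obtain ⟨m, hm1, hm2⟩ := rot_hit P (i * k) x hx (a + i * j)
      ⟨by linarith [hm.1], by linarith [hm.2]⟩
    exact ⟨m, hm1.trans (Nat.mul_le_mul_right _ hi), by rw [hm2]; exact hm⟩
  intro x
  have key : ∀ w : ℝ, 0 ≤ w → w ≤ 1 → ∃ i : ℕ, i ≤ ⌊1 / |s|⌋₊ + 1 ∧ w < i * |s| ∧
      i * |s| ≤ w + |s| := by
    intro w hw hw1
    refine ⟨⌊w / |s|⌋₊ + 1, ?_, ?_, ?_⟩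
    · gcongr
    · have := Nat.lt_floor_add_one (w / |s|)
      rw [div_lt_iff₀ hpos] at this
      push_cast; exact this
    · have := Nat.floor_le (show 0 ≤ w / |s| by positivity)
      rw [le_div_iff₀ hpos] at this
      push_cast; linarith
  rcases lt_or_gt_of_ne h0 with hneg | hp
  · have hab : |s| = -s := abs_of_neg hneg
    obtain ⟨i, hi, h1, h2⟩ := key (x + ⌈β - x⌉ - β) (by linarith [Int.le_ceil (β - x)])
      (by linarith [Int.ceil_lt_add_one (β - x)])
    refine ⟨⌈β - x⌉, i, hi, ?_, ?_⟩ <;> rw [hab] at h1 h2 hs <;> linarith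
  · have hab : |s| = s := abs_of_pos hp
    obtain ⟨i, hi, h1, h2⟩ := key (α - x - ⌊α - x⌋) (by linarith [Int.floor_le (α - x)])
      (by linarith [Int.lt_floor_add_one (α - x)])
    refine ⟨⌊α - x⌋, i, hi, ?_, ?_⟩ <;> rw [hab] at h1 h2 hs <;> linarith

/-- `x` and `y` have the same coding during `N` steps. -/
def SameCode (ε l c : ℝ) (N : ℕ) (x y : ℝ) : Prop :=
  ∀ i < N, letter3 ε l c ((T3 ε l c)^[i] x) = letter3 ε l c ((T3 ε l c)^[i] y)

theorem same_trans {ε l c : ℝ} {N : ℕ} {x y : ℝ} (h : SameCode ε l c N x y) :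
    ∀ i ≤ N, (T3 ε l c)^[i] y = (T3 ε l c)^[i] x + (y - x) := by
  intro i
  induction i with
  | zero => intro _; simp
  | succ i ih =>
    intro hi
    rw [Function.iterate_succ_apply', Function.iterate_succ_apply', T3_eq, T3_eq ε l c (_^[i] x),
      h i (by omega), ih (by omega)]
    ring

theorem same_mono {ε l c : ℝ} {N M : ℕ} {x y : ℝ} (h : SameCode ε l c N x y) (hM : M ≤ N) :
    SameCode ε l c M x y := fun i hi => h i (by omega)

theorem same_symm {ε l c : ℝ} {N : ℕ} {x y : ℝ} (h : SameCode ε l c N x y) :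
    SameCode ε l c N y x := fun i hi => (h i hi).symm

theorem same_close {ε l c : ℝ} (P : Par ε l c) {δ : ℝ} (hδ : 0 < δ) : ∃ N : ℕ,
    ∀ x ∈ Ico c (c + l), ∀ y ∈ Ico c (c + l), SameCode ε l c N x y → |y - x| < δ := by
  have := P.e0; have := P.e1; have := P.h1; have := P.h2; have := P.h3
  obtain ⟨N, hN⟩ := unif_min P (α := max c (c + l - 1 + ε - δ)) (β := c + l - 1 + ε)
    (by rw [max_lt_iff]; constructor <;> linarith) (le_max_left _ _) (by linarith)
  refine ⟨N + 1, fun x hx y hy h => ?_⟩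
  wlog hxy : x ≤ y generalizing x y
  · rw [abs_sub_comm]
    exact this y hy x hx (same_symm h) (by linarith)
  by_contra hc
  push Not at hc
  rw [abs_of_nonneg (by linarith)] at hc
  obtain ⟨m, hm, h1, h2⟩ := hN x hx
  rw [max_lt_iff] at h1
  have e := same_trans h m (by omega)
  have := (h m (by omega)).symm.trans (letter_zero.2 h2)
  rw [letter_zero] at this
  linarith [h1.2]

theorem letter_right (ε l c x : ℝ) : ∀ᶠ y in 𝓝[≥] x, letter3 ε l c y = letter3 ε l c x := by
  rcases letter_cases ε l c x with ⟨e, h, _⟩ | ⟨e, h, h', _⟩ | ⟨e, h, h', _⟩ <;> rw [e]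
  · filter_upwards [nhdsWithin_le_nhds (Iio_mem_nhds h)] with y hy
    exact letter_zero.2 hy
  · filter_upwards [nhdsWithin_le_nhds (Iio_mem_nhds h'), self_mem_nhdsWithin] with y hy hy'
    exact letter_one.2 ⟨h.trans hy', hy⟩
  · filter_upwards [self_mem_nhdsWithin] with y hy'
    exact letter_two.2 ⟨h.trans hy', h'.trans hy'⟩

theorem letter_nhds {ε l c x : ℝ} (hp : x ≠ c + ε) (hq : x ≠ c + l - 1 + ε) :
    ∀ᶠ y in 𝓝 x, letter3 ε l c y = letter3 ε l c x := by
  rcases letter_cases ε l c x with ⟨e, h, _⟩ | ⟨e, h, h', _⟩ | ⟨e, h, h', _⟩ <;> rw [e]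
  · filter_upwards [Iio_mem_nhds h] with y hy
    exact letter_zero.2 hy
  · filter_upwards [Iio_mem_nhds h', Ioi_mem_nhds (lt_of_le_of_ne h hq.symm)] with y hy hy'
    exact letter_one.2 ⟨le_of_lt hy', hy⟩
  · filter_upwards [Ioi_mem_nhds (lt_of_le_of_ne h hq.symm),
      Ioi_mem_nhds (lt_of_le_of_ne h' hp.symm)] with y hy hy'
    exact letter_two.2 ⟨le_of_lt hy, le_of_lt hy'⟩

theorem same_succ {ε l c : ℝ} {N : ℕ} {x y : ℝ} (h : SameCode ε l c N x y)
    (h' : letter3 ε l c ((T3 ε l c)^[N] x + (y - x)) = letter3 ε l c ((T3 ε l c)^[N] x)) :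
    SameCode ε l c (N + 1) x y := by
  intro i hi
  rcases Nat.lt_succ_iff_lt_or_eq.1 hi with hi | rfl
  · exact h i hi
  · rw [same_trans h i le_rfl, h']

theorem same_right (ε l c : ℝ) (N : ℕ) (x : ℝ) :
    ∀ᶠ y in 𝓝[≥] x, SameCode ε l c N x y := by
  induction N with
  | zero => exact Eventually.of_forall fun y i hi => absurd hi (by omega)
  | succ N ih =>
    have ht : Tendsto (fun y => (T3 ε l c)^[N] x + (y - x)) (𝓝[≥] x) (𝓝[≥] ((T3 ε l c)^[N] x)) := by
      apply tendsto_nhdsWithin_of_tendsto_nhds_of_eventually_within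
      · apply tendsto_nhdsWithin_of_tendsto_nhds
        have : Continuous (fun y => (T3 ε l c)^[N] x + (y - x)) := by fun_prop
        simpa using this.tendsto x
      · filter_upwards [self_mem_nhdsWithin] with y hy
        simpa using hy
    filter_upwards [ih, ht.eventually (letter_right ε l c _)] with y h1 h2
    exact same_succ h1 h2

theorem same_nhds {ε l c : ℝ} {N : ℕ} {x : ℝ}
    (h : ∀ i < N, (T3 ε l c)^[i] x ≠ c + ε ∧ (T3 ε l c)^[i] x ≠ c + l - 1 + ε) :
    ∀ᶠ y in 𝓝 x, SameCode ε l c N x y := by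
  induction N with
  | zero => exact Eventually.of_forall fun y i hi => absurd hi (by omega)
  | succ N ih =>
    have ht : Tendsto (fun y => (T3 ε l c)^[N] x + (y - x)) (𝓝 x) (𝓝 ((T3 ε l c)^[N] x)) := by
      have : Continuous (fun y => (T3 ε l c)^[N] x + (y - x)) := by fun_prop
      simpa using this.tendsto x
    filter_upwards [ih fun i hi => h i (by omega),
      ht.eventually (letter_nhds (h N (by omega)).1 (h N (by omega)).2)] with y h1 h2
    exact same_succ h1 h2

structure Orb (ε l c : ℝ) (u : ℤ → Fin 3) (t : ℤ → ℝ) : Prop where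
  t0 : t 0 = 0
  mem : ∀ n, t n ∈ Ico c (c + l)
  nxt : ∀ n, t (n + 1) = T3 ε l c (t n)
  code : ∀ n, u n = letter3 ε l c (t n)

theorem Orb.iter {ε l c : ℝ} {u : ℤ → Fin 3} {t : ℤ → ℝ} (O : Orb ε l c u t) (n : ℤ) (m : ℕ) :
    t (n + m) = (T3 ε l c)^[m] (t n) := by
  induction m with
  | zero => simp
  | succ m ih => rw [Function.iterate_succ_apply', ← ih, ← O.nxt]; push_cast; congr 1; ring

theorem Orb.inj {ε l c : ℝ} {u : ℤ → Fin 3} {t : ℤ → ℝ} (P : Par ε l c) (O : Orb ε l c u t)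
    {n m : ℤ} (h : t n = t m) : n = m := by
  wlog hnm : n ≤ m generalizing n m
  · exact (this h.symm (by omega)).symm
  obtain ⟨d, rfl⟩ := Int.le.dest hnm
  rw [O.iter] at h
  have := iter_time_inj P (n := 0) (t n) (by simpa using h)
  simp [← this]

theorem Orb.dense {ε l c : ℝ} {u : ℤ → Fin 3} {t : ℤ → ℝ} (P : Par ε l c) (O : Orb ε l c u t)
    {α β : ℝ} (hαβ : α < β) (hα : c ≤ α) (hβ : β ≤ c + l) : ∃ n : ℕ, t n ∈ Ioo α β := by
  obtain ⟨N, hN⟩ := unif_min P hαβ hα hβ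
  obtain ⟨m, -, hm⟩ := hN (t 0) (O.mem 0)
  rw [← O.iter, zero_add] at hm
  exact ⟨m, hm⟩

theorem Orb.letters {ε l c : ℝ} {u : ℤ → Fin 3} {t : ℤ → ℝ} (P : Par ε l c) (O : Orb ε l c u t)
    (a : Fin 3) : ∃ n : ℕ, u n = a := by
  have := P.e0; have := P.e1; have := P.h1; have := P.h2; have := P.h3
  fin_cases a
  · obtain ⟨n, h1, h2⟩ := O.dense P (α := c) (β := c + l - 1 + ε) (by linarith) le_rfl (by linarith)
    exact ⟨n, by rw [O.code]; exact letter_zero.2 h2⟩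
  · obtain ⟨n, h1, h2⟩ := O.dense P (α := c + l - 1 + ε) (β := c + ε) (by linarith) (by linarith)
      (by linarith)
    exact ⟨n, by rw [O.code]; exact letter_one.2 ⟨h1.le, h2⟩⟩
  · obtain ⟨n, h1, h2⟩ := O.dense P (α := c + ε) (β := c + l) (by linarith) (by linarith) le_rfl
    exact ⟨n, by rw [O.code]; exact letter_two.2 ⟨by linarith, h1.le⟩⟩

theorem Orb.same {ε l c : ℝ} {u : ℤ → Fin 3} {t : ℤ → ℝ} (O : Orb ε l c u t) (N : ℕ) (m n : ℤ) :
    SameCode ε l c N (t m) (t n) ↔ ∀ i : ℕ, i < N → u (m + i) = u (n + i) := by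
  unfold SameCode
  simp only [← O.iter, ← O.code]

structure Adm (u : ℤ → Fin 3) (k : ℤ → ℤ) : Prop where
  mono : StrictMono k
  z : k 0 = 0
  len : ∀ m n, u m = u n → k (m + 1) - k m = k (n + 1) - k n
  code : ∀ m n, u m = u n → ∀ i : ℤ, 0 ≤ i → i < k (m + 1) - k m → u (k m + i) = u (k n + i)

theorem Adm.block {u : ℤ → Fin 3} {k : ℤ → ℤ} (A : Adm u k) (m n : ℤ) (N : ℕ)
    (h : ∀ i : ℕ, i < N → u (m + i) = u (n + i)) :
    k (m + N) - k m = k (n + N) - k n ∧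
      ∀ i : ℤ, 0 ≤ i → i < k (m + N) - k m → u (k m + i) = u (k n + i) := by
  induction N with
  | zero => simp; intro i h1 h2; omega
  | succ N ih =>
    obtain ⟨h1, h2⟩ := ih fun i hi => h i (by omega)
    have h3 := A.len _ _ (h N (by omega))
    have h4 := A.code _ _ (h N (by omega))
    push_cast
    rw [← add_assoc, ← add_assoc]
    refine ⟨by omega, fun i hi hi' => ?_⟩
    by_cases hc : i < k (m + N) - k m
    · exact h2 i hi hc
    · have := h4 (i - (k (m + N) - k m)) (by omega) (by omega)
      convert this using 2 <;> omega

theorem Adm.comp {u : ℤ → Fin 3} {k : ℤ → ℤ} (A : Adm u k) : Adm u (fun n => k (k n)) := by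
  have key : ∀ m n, u m = u n → k (k (m + 1)) - k (k m) = k (k (n + 1)) - k (k n) ∧
      ∀ i : ℤ, 0 ≤ i → i < k (k (m + 1)) - k (k m) → u (k (k m) + i) = u (k (k n) + i) := by
    intro m n h
    have hl := A.len m n h
    have hpos : k m < k (m + 1) := A.mono (by omega)
    obtain ⟨N, hN⟩ := Int.le.dest hpos.le
    have := A.block (k m) (k n) N (fun i hi => A.code m n h i (by omega) (by omega))
    rw [hN, show k n + N = k (n + 1) by omega] at this
    exact this
  exact ⟨A.mono.comp A.mono, by simp [A.z], fun m n h => (key m n h).1, fun m n h => (key m n h).2⟩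

theorem not_both {ε l c : ℝ} (P : Par ε l c) (x : ℝ) (i j : ℕ)
    (h1 : (T3 ε l c)^[i] x = c + ε) (h2 : (T3 ε l c)^[j] x = c + l - 1 + ε) : False := by
  obtain ⟨A, B, e, -⟩ := iter_form ε l c i x
  obtain ⟨A', B', e', -⟩ := iter_form ε l c j x
  apply P.nd
  refine ⟨1 + A' - A, B - B', ?_⟩
  push_cast
  rw [e] at h1
  rw [e'] at h2
  linarith

theorem T3_p {ε l c : ℝ} (P : Par ε l c) : T3 ε l c (c + ε) = c := by
  have := P.h3
  rcases letter_cases ε l c (c + ε) with ⟨_, h, e⟩ | ⟨_, h, h', e⟩ | ⟨_, h, h', e⟩ <;> rw [e] <;>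
    linarith

theorem T3_c {ε l c : ℝ} (P : Par ε l c) : T3 ε l c c = c + 1 - ε := by
  have := P.h2; have := P.h1; have := P.e0
  rcases letter_cases ε l c c with ⟨_, h, e⟩ | ⟨_, h, h', e⟩ | ⟨_, h, h', e⟩ <;> rw [e] <;>
    linarith

theorem close_block {ε l c : ℝ} {u : ℤ → Fin 3} {t : ℤ → ℝ} {k : ℤ → ℤ} {N : ℕ} {δ : ℝ}
    (O : Orb ε l c u t) (A : Adm u k)
    (hN : ∀ x ∈ Ico c (c + l), ∀ y ∈ Ico c (c + l), SameCode ε l c N x y → |y - x| < δ)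
    (m n : ℤ) (h : ∀ i : ℕ, i < N → u (m + i) = u (n + i)) :
    |t (k n) - t (k m)| < δ ∧ t (k (n + N)) = t (k (m + N)) + (t (k n) - t (k m)) := by
  obtain ⟨h1, h2⟩ := A.block m n N h
  have hge : ∀ N : ℕ, (N : ℤ) ≤ k (m + N) - k m := by
    intro N
    induction N with
    | zero => simp
    | succ N ih =>
      have := A.mono (show m + N < m + N + 1 by omega)
      push_cast
      rw [← add_assoc]
      omega
  obtain ⟨K, hK⟩ := Int.le.dest (show (N : ℤ) ≤ k (m + N) - k m from hge N)
  have hs : SameCode ε l c (N + K) (t (k m)) (t (k n)) := by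
    rw [O.same]
    intro i hi
    exact h2 i (by omega) (by omega)
  refine ⟨hN _ (O.mem _) _ (O.mem _) (same_mono hs (by omega)), ?_⟩
  have := same_trans hs (N + K) le_rfl
  rw [← O.iter, ← O.iter] at this
  convert this using 3 <;> push_cast <;> omega

theorem Y_rel {ε l c : ℝ} {u : ℤ → Fin 3} {t : ℤ → ℝ} {k : ℤ → ℤ} (P : Par ε l c)
    (O : Orb ε l c u t) (A : Adm u k) (Y : Fin 3 → ℝ)
    (hY : ∀ n, t (k (n + 1)) = t (k n) + Y (u n)) : Y 1 = Y 0 + Y 2 := by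
  have he0 := P.e0; have he1 := P.e1; have hl1 := P.h1; have hl2 := P.h2; have hl3 := P.h3
  suffices H : ∀ δ > 0, |Y 1 - (Y 0 + Y 2)| < 2 * δ by
    by_contra hne
    have hpos : 0 < |Y 1 - (Y 0 + Y 2)| := abs_pos.2 (sub_ne_zero.2 hne)
    have := H (|Y 1 - (Y 0 + Y 2)| / 2) (by positivity)
    linarith
  intro δ hδ
  obtain ⟨N, hN⟩ := same_close P hδ
  obtain ⟨d, hd, hdN⟩ := iter_surj P (y := c + ε) ⟨by linarith, by linarith⟩ N
  have hTp : ∀ i, (T3 ε l c)^[i] (c + 1 - ε) = (T3 ε l c)^[i + 2] (c + ε) := by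
    intro i
    rw [Function.iterate_add_apply]
    simp [T3_p P, T3_c P]
  have e1 : ∀ᶠ y in 𝓝 d, SameCode ε l c N d y := by
    apply same_nhds
    intro i hi
    refine ⟨fun h => ?_, fun h => not_both P d N i hdN h⟩
    have := iter_time_inj P d (h.trans hdN.symm)
    omega
  have e2 : ∀ᶠ y in 𝓝 (c + 1 - ε), SameCode ε l c N (c + 1 - ε) y := by
    apply same_nhds
    intro i hi
    rw [hTp]
    refine ⟨fun h => iter_ne P (by omega) _ h, fun h => not_both P (c + ε) 0 _ rfl h⟩
  have hcd : c < d := by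
    refine lt_of_le_of_ne hd.1 ?_
    rintro rfl
    refine iter_ne P (n := N + 1) (by omega) (c + ε) ?_
    rw [Function.iterate_succ_apply, T3_p P, hdN]
  have ht : Tendsto (fun y => c + 1 - ε + (y - d)) (𝓝 d) (𝓝 (c + 1 - ε)) := by
    have : Continuous (fun y => c + 1 - ε + (y - d)) := by fun_prop
    simpa using this.tendsto d
  obtain ⟨η, hη, hb⟩ := Metric.eventually_nhds_iff.1 (e1.and (ht.eventually e2))
  have hsm : 0 < min η (min (1 - l) (l - 1 + ε)) := by
    simp only [lt_min_iff]; exact ⟨hη, by linarith, by linarith⟩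
  set η' := min η (min (1 - l) (l - 1 + ε)) with hη'
  have hle1 : η' ≤ η := min_le_left _ _
  have hle2 : η' ≤ 1 - l := (min_le_right _ _).trans (min_le_left _ _)
  have hle3 : η' ≤ l - 1 + ε := (min_le_right _ _).trans (min_le_right _ _)
  obtain ⟨n, hn1, hn2⟩ := O.dense P (α := max c (d - η')) (β := d)
    (by rw [max_lt_iff]; exact ⟨hcd, by linarith⟩) (le_max_left _ _) hd.2.le
  obtain ⟨m, hm1, hm2⟩ := O.dense P (α := d) (β := min (c + l) (d + η'))
    (by rw [lt_min_iff]; exact ⟨hd.2, by linarith⟩) hcd.le (min_le_left _ _)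
  rw [max_lt_iff] at hn1
  rw [lt_min_iff] at hm2
  obtain ⟨sn, sn'⟩ := hb (y := t n) (by rw [Real.dist_eq, abs_lt]; constructor <;> linarith)
  obtain ⟨sm, sm'⟩ := hb (y := t m) (by rw [Real.dist_eq, abs_lt]; constructor <;> linarith)
  have tn : t (n + N) = c + ε + (t n - d) := by
    have := same_trans sn N le_rfl
    rw [O.iter, this, hdN]
  have tm : t (m + N) = c + ε + (t m - d) := by
    have := same_trans sm N le_rfl
    rw [O.iter, this, hdN]
  have un : u (n + N) = 1 := by
    rw [O.code, letter_one, tn]; constructor <;> linarith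
  have um : u (m + N) = 2 := by
    rw [O.code, letter_two, tm]; constructor <;> linarith
  have tn1 : t (n + N + 1) = c + 1 - ε + (t n - d) := by
    rw [O.nxt, T3_eq, ← O.code, un, tn]; simp [stp]; ring
  have tm1 : t (m + N + 1) = c + (t m - d) := by
    rw [O.nxt, T3_eq, ← O.code, um, tm]; simp [stp]; ring
  have um1 : u (m + N + 1) = 0 := by
    rw [O.code, letter_zero, tm1]; linarith
  have tm2 : t (m + N + 1 + 1) = c + 1 - ε + (t m - d) := by
    rw [O.nxt, T3_eq, ← O.code, um1, tm1]; simp [stp]; ring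
  have b1 := close_block O A hN n m ((O.same N n m).1 fun i hi => (sn i hi).symm.trans (sm i hi))
  have b2 := close_block O A hN (n + N + 1) (m + N + 1 + 1) ((O.same N _ _).1 fun i hi => by
    rw [tn1, tm2]; exact (sn' i hi).symm.trans (sm' i hi))
  have y1 := hY (n + N)
  have y2 := hY (m + N)
  have y3 := hY (m + N + 1)
  rw [un] at y1
  rw [um] at y2
  rw [um1] at y3
  have h1 := abs_lt.1 b1.1
  have h2 := abs_lt.1 b2.1
  have h3 := b1.2
  rw [abs_lt]
  constructor <;> linarith

theorem exists_nu {ε l c : ℝ} {u : ℤ → Fin 3} {t : ℤ → ℝ} {k : ℤ → ℤ} (P : Par ε l c)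
    (O : Orb ε l c u t) (A : Adm u k) : ∃ ν : ℝ, ∀ n, t (k n) = ν * t n := by
  have he0 := P.e0; have he1 := P.e1; have hl1 := P.h1; have hl2 := P.h2; have hl3 := P.h3
  have hc0 := P.c0; have hc1 := P.c1
  choose N hN using O.letters P
  have hY : ∃ Y : Fin 3 → ℝ, ∀ n, t (k (n + 1)) = t (k n) + Y (u n) := by
    refine ⟨fun a => t (k (N a + 1)) - t (k (N a)), fun n => ?_⟩
    have e : u n = u (N (u n)) := (hN _).symm
    have hl := A.len _ _ e
    have hpos : k n < k (n + 1) := A.mono (by omega)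
    obtain ⟨K, hK⟩ := Int.le.dest hpos.le
    have hs : SameCode ε l c K (t (k n)) (t (k (N (u n)))) := by
      rw [O.same]
      intro i hi
      exact A.code _ _ e i (by omega) (by omega)
    have := same_trans hs K le_rfl
    rw [← O.iter, ← O.iter, hK, show k (N (u n)) + K = k (N (u n) + 1) by omega] at this
    linarith
  obtain ⟨Y, hY⟩ := hY
  have hrel := Y_rel P O A Y hY
  have cnt : ∀ n : ℕ, ∃ X Z : ℕ, n ≤ X + Z ∧ t n = (1 - ε) * X - ε * Z ∧
      t (k n) = Y 0 * X + Y 2 * Z := by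
    intro n
    induction n with
    | zero => exact ⟨0, 0, by simp, by simp [O.t0], by simp [A.z, O.t0]⟩
    | succ n ih =>
      obtain ⟨X, Z, h1, h2, h3⟩ := ih
      have hy := hY n
      have hn := O.nxt n
      rw [T3_eq, ← O.code] at hn
      push_cast
      have : u n = 0 ∨ u n = 1 ∨ u n = 2 := by
        generalize u n = a; fin_cases a <;> simp
      rcases this with h | h | h <;> rw [h] at hy hn <;> simp [stp] at hn
      · exact ⟨X + 1, Z, by omega, by rw [hn, h2]; push_cast; ring, by rw [hy, h3]; push_cast; ring⟩
      · exact ⟨X + 1, Z + 1, by omega, by rw [hn, h2]; push_cast; ring,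
          by rw [hy, h3, hrel]; push_cast; ring⟩
      · exact ⟨X, Z + 1, by omega, by rw [hn, h2]; push_cast; ring, by rw [hy, h3]; push_cast; ring⟩
  have tb : ∀ n, |t n| ≤ 1 := fun n => by
    have := O.mem n
    rw [abs_le]; constructor <;> linarith [this.1, this.2]
  have hD : Y 0 * ε + Y 2 * (1 - ε) = 0 := by
    by_contra hne
    set D := Y 0 * ε + Y 2 * (1 - ε) with hDdef
    have hDpos : 0 < |D| := abs_pos.2 hne
    obtain ⟨n, hn⟩ := exists_nat_gt ((1 + |Y 0 - Y 2|) / |D|)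
    rw [div_lt_iff₀ hDpos] at hn
    obtain ⟨X, Z, h1, h2, h3⟩ := cnt n
    have e : D * ((X : ℝ) + Z) = t (k n) - (Y 0 - Y 2) * t n := by
      rw [h2, h3, hDdef]; ring
    have e2 : |D| * ((X : ℝ) + Z) ≤ 1 + |Y 0 - Y 2| := by
      calc |D| * ((X : ℝ) + Z) = |D * ((X : ℝ) + Z)| := by
            rw [abs_mul, abs_of_nonneg (show (0 : ℝ) ≤ (X : ℝ) + Z by positivity)]
        _ ≤ |t (k n)| + |(Y 0 - Y 2) * t n| := by rw [e]; exact abs_sub _ _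
        _ ≤ 1 + |Y 0 - Y 2| := by
            rw [abs_mul]
            have := mul_le_mul_of_nonneg_left (tb n) (abs_nonneg (Y 0 - Y 2))
            linarith [tb (k n)]
    have e3 : (n : ℝ) ≤ (X : ℝ) + Z := by exact_mod_cast h1
    nlinarith
  refine ⟨Y 0 - Y 2, ?_⟩
  have hstep : ∀ a, Y a = (Y 0 - Y 2) * stp ε a := by
    intro a
    fin_cases a <;> simp [stp]
    · linarith
    · rw [hrel]; linarith
    · linarith
  have hn : ∀ n, t (n + 1) = t n + stp ε (u n) := fun n => by rw [O.nxt, T3_eq, ← O.code]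
  intro n
  induction n with
  | zero => simp [A.z, O.t0]
  | succ n ih => rw [hY, hn, ih, hstep (u n)]; ring
  | pred n ih =>
    have h1 := hY (-n - 1)
    have h2 := hn (-n - 1)
    rw [sub_add_cancel] at h1 h2
    rw [hstep (u _)] at h1
    rw [h1, h2] at ih
    linarith

noncomputable def cw (ε l c : ℝ) (n : ℕ) (x : ℝ) : List (Fin 3) :=
  List.ofFn (fun i : Fin n => letter3 ε l c ((T3 ε l c)^[(i : ℕ)] x))

theorem cw_succ (ε l c : ℝ) (n : ℕ) (x : ℝ) :
    cw ε l c (n + 1) x = cw ε l c n x ++ [letter3 ε l c ((T3 ε l c)^[n] x)] := by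
  unfold cw
  rw [List.ofFn_succ']
  simp

theorem cw_add (ε l c : ℝ) (n m : ℕ) (x : ℝ) :
    cw ε l c (n + m) x = cw ε l c n x ++ cw ε l c m ((T3 ε l c)^[n] x) := by
  induction m with
  | zero => simp [cw]
  | succ m ih =>
    rw [← add_assoc, cw_succ, ih, cw_succ, ← Function.iterate_add_apply, List.append_assoc,
      add_comm m n]

theorem cw_sum (ε l c : ℝ) (n : ℕ) (x : ℝ) :
    ((cw ε l c n x).map (stp ε)).sum = (T3 ε l c)^[n] x - x := by
  induction n with
  | zero => simp [cw]
  | succ n ih =>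
    rw [cw_succ, List.map_append, List.sum_append, ih, Function.iterate_succ_apply', T3_eq]
    simp
    ring

theorem stp_inj {ε l c : ℝ} (P : Par ε l c) {a b : Fin 3} (h : stp ε a = stp ε b) : a = b := by
  have := P.e0; have := P.e1
  fin_cases a <;> fin_cases b <;> simp [stp] at h ⊢ <;> linarith

theorem cw_eq {ε l c : ℝ} {n : ℕ} {x y : ℝ} :
    cw ε l c n x = cw ε l c n y ↔ SameCode ε l c n x y := by
  unfold cw SameCode
  rw [List.ofFn_inj, funext_iff]
  exact ⟨fun h i hi => h ⟨i, hi⟩, fun h i => h i i.2⟩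

/-- left endpoints of the exchanged intervals -/
noncomputable def dpt (ε l c : ℝ) : Fin 3 → ℝ := ![c, c + l - 1 + ε, c + ε]

theorem dpt_mem {ε l c : ℝ} (P : Par ε l c) (a : Fin 3) : dpt ε l c a ∈ Ico c (c + l) := by
  have := P.e0; have := P.e1; have := P.h1; have := P.h2; have := P.h3
  fin_cases a <;> simp only [dpt, mem_Ico] <;> constructor <;> simp <;> linarith

theorem dpt_letter {ε l c : ℝ} (P : Par ε l c) (a : Fin 3) :
    letter3 ε l c (dpt ε l c a) = a := by
  have := P.e0; have := P.e1; have := P.h1; have := P.h2; have := P.h3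
  fin_cases a
  · simp [dpt, letter_zero]; linarith
  · simp [dpt, letter_one]; linarith
  · simp [dpt, letter_two]; linarith

theorem dpt_le {ε l c x : ℝ} (hx : x ∈ Ico c (c + l)) :
    dpt ε l c (letter3 ε l c x) ≤ x := by
  have := hx.1
  rcases letter_cases ε l c x with ⟨e, h, _⟩ | ⟨e, h, h', _⟩ | ⟨e, h, h', _⟩ <;> rw [e] <;>
    simp [dpt] <;> linarith

theorem letter_between {ε l c x y : ℝ} (P : Par ε l c) (h1 : dpt ε l c (letter3 ε l c x) ≤ y)
    (h2 : y ≤ x) : letter3 ε l c y = letter3 ε l c x := by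
  have := P.h3
  rcases letter_cases ε l c x with ⟨e, h, _⟩ | ⟨e, h, h', _⟩ | ⟨e, h, h', _⟩ <;> rw [e] at h1 ⊢ <;>
    simp [dpt] at h1
  · exact letter_zero.2 (by linarith)
  · exact letter_one.2 ⟨by linarith, by linarith⟩
  · exact letter_two.2 ⟨by linarith, by linarith⟩

/-- The tower data of a scaling `ν` with return times `r`. -/
structure Tow (ε l c ν : ℝ) (r : Fin 3 → ℕ) : Prop where
  n0 : 0 < ν
  n1 : ν < 1
  rpos : ∀ a, 1 ≤ r a
  same : ∀ x ∈ Ico c (c + l), ∀ y ∈ Ico c (c + l), letter3 ε l c x = letter3 ε l c y →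
    SameCode ε l c (r (letter3 ε l c x)) (ν * x) (ν * y)
  ret : ∀ x ∈ Ico c (c + l), (T3 ε l c)^[r (letter3 ε l c x)] (ν * x) = ν * T3 ε l c x

theorem scale_mem {ε l c ν x : ℝ} (P : Par ε l c) (h0 : 0 < ν) (h1 : ν < 1)
    (hx : x ∈ Ico c (c + l)) : ν * x ∈ Ico c (c + l) := by
  have := P.c0; have := P.c1
  obtain ⟨h2, h3⟩ := hx
  constructor <;> nlinarith

def Dbl (ε l c ν : ℝ) (r : Fin 3 → ℕ) (w : ℝ) : Prop :=
  ∃ x ∈ Ico c (c + l), ∃ y ∈ Ico c (c + l), ∃ i j : ℕ, i ≠ j ∧ i < r (letter3 ε l c x) ∧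
    j < r (letter3 ε l c y) ∧ (T3 ε l c)^[i] (ν * x) = w ∧ (T3 ε l c)^[j] (ν * y) = w

theorem Dbl.next {ε l c ν : ℝ} {r : Fin 3 → ℕ} (P : Par ε l c) (W : Tow ε l c ν r) {w : ℝ}
    (h : Dbl ε l c ν r w) : Dbl ε l c ν r (T3 ε l c w) := by
  obtain ⟨x, hx, y, hy, i, j, hij, hi, hj, ei, ej⟩ := h
  have ei' : (T3 ε l c)^[i + 1] (ν * x) = T3 ε l c w := by rw [Function.iterate_succ_apply', ei]
  have ej' : (T3 ε l c)^[j + 1] (ν * y) = T3 ε l c w := by rw [Function.iterate_succ_apply', ej]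
  by_cases h1 : i + 1 < r (letter3 ε l c x)
  · by_cases h2 : j + 1 < r (letter3 ε l c y)
    · exact ⟨x, hx, y, hy, i + 1, j + 1, by omega, h1, h2, ei', ej'⟩
    · have h2' : j + 1 = r (letter3 ε l c y) := by omega
      exact ⟨x, hx, T3 ε l c y, T3_mem P hy, i + 1, 0, by omega, h1, W.rpos _, ei', by
        rw [← ej', h2', W.ret y hy]; rfl⟩
  · have h1' : i + 1 = r (letter3 ε l c x) := by omega
    by_cases h2 : j + 1 < r (letter3 ε l c y)
    · exact ⟨T3 ε l c x, T3_mem P hx, y, hy, 0, j + 1, by omega, W.rpos _, h2, by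
        rw [← ei', h1', W.ret x hx]; rfl, ej'⟩
    · have h2' : j + 1 = r (letter3 ε l c y) := by omega
      exfalso
      have e : ν * T3 ε l c x = ν * T3 ε l c y := by
        rw [← W.ret x hx, ← W.ret y hy, ← h1', ← h2', ei', ej']
      have := T3_inj P hx hy (mul_left_cancel₀ W.n0.ne' e)
      subst this
      exact hij (iter_time_inj P _ (ei.trans ej.symm))

theorem Dbl.left {ε l c ν : ℝ} {r : Fin 3 → ℕ} (P : Par ε l c) (W : Tow ε l c ν r) {w D : ℝ}
    (h : Dbl ε l c ν r w) (hw : w ∈ Ico c (c + l)) (hD : D ∈ Ico c (c + l))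
    (hlet : ∀ y < D, letter3 ε l c y ≠ letter3 ε l c D) :
    ∃ a b : Fin 3, a ≠ b ∧ (∃ i, (T3 ε l c)^[i] (ν * dpt ε l c a) = D) ∧
      ∃ i, (T3 ε l c)^[i] (ν * dpt ε l c b) = D := by
  have hν := W.n0
  let F : Set ℝ := (⋃ a : Fin 3, (fun i => (T3 ε l c)^[i] (ν * dpt ε l c a)) '' Iio (r a)) ∩ Ioi D
  have hF : F.Finite := Set.Finite.inter_of_left
    (Set.finite_iUnion fun a => (Set.finite_Iio _).image _) _
  have h0 : D ∉ F := fun h => lt_irrefl D h.2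
  obtain ⟨δ, hδ, hb⟩ := Metric.mem_nhds_iff.1 (hF.isClosed.isOpen_compl.mem_nhds h0)
  obtain ⟨N, hN⟩ := unif_min P (α := D) (β := min (c + l) (D + δ))
    (by rw [lt_min_iff]; exact ⟨hD.2, by linarith⟩) hD.1 (min_le_left _ _)
  obtain ⟨n, -, hn1, hn2⟩ := hN w hw
  rw [lt_min_iff] at hn2
  have hd : ∀ n, Dbl ε l c ν r ((T3 ε l c)^[n] w) := by
    intro n
    induction n with
    | zero => simpa using h
    | succ n ih => rw [Function.iterate_succ_apply']; exact ih.next P W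
  have key : ∀ x ∈ Ico c (c + l), ∀ i < r (letter3 ε l c x),
      (T3 ε l c)^[i] (ν * x) = (T3 ε l c)^[n] w →
      (T3 ε l c)^[i] (ν * dpt ε l c (letter3 ε l c x)) = D := by
    intro x hx i hi e
    set a := letter3 ε l c x with ha
    have hle := dpt_le (ε := ε) hx
    rw [← ha] at hle
    have tr : ∀ y ∈ Ico c (c + l), letter3 ε l c y = a →
        (T3 ε l c)^[i] (ν * y) = (T3 ε l c)^[n] w + (ν * y - ν * x) := by
      intro y hy hya
      rw [same_trans (W.same x hx y hy (by rw [hya])) i hi.le, e]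
    have e1 := tr _ (dpt_mem P a) (dpt_letter P a)
    have hmul := mul_le_mul_of_nonneg_left hle hν.le
    set α := (T3 ε l c)^[i] (ν * dpt ε l c a) with hα
    rcases lt_trichotomy α D with hlt | heq | hgt
    · exfalso
      let y := x - ((T3 ε l c)^[n] w - D) / ν
      have hyν : ν * y = ν * x - ((T3 ε l c)^[n] w - D) := by
        simp only [y]; field_simp
      have hy1 : dpt ε l c a ≤ y := by
        refine le_of_mul_le_mul_left ?_ hν
        linarith
      have hy2 : y ≤ x := by
        refine le_of_mul_le_mul_left ?_ hν
        linarith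
      have hyl : letter3 ε l c y = a := letter_between P hy1 hy2
      have hym : y ∈ Ico c (c + l) := ⟨(dpt_mem P a).1.trans hy1, hy2.trans_lt hx.2⟩
      have e2 := tr y hym hyl
      have hs := W.same y hym _ (dpt_mem P a) (by rw [hyl, dpt_letter P])
      rw [hyl] at hs
      have := hs i hi
      rw [← hα, e2, hyν, show (T3 ε l c)^[n] w + (ν * x - ((T3 ε l c)^[n] w - D) - ν * x) = D by
        ring] at this
      exact hlet α hlt this.symm
    · exact heq
    · exfalso
      have hball : α ∈ Metric.ball D δ := by
        rw [Metric.mem_ball, Real.dist_eq, abs_lt]; constructor <;> linarith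
      exact hb hball ⟨Set.mem_iUnion.2 ⟨a, i, hi, rfl⟩, hgt⟩
  obtain ⟨x, hx, y, hy, i, j, hij, hi, hj, ei, ej⟩ := hd n
  have k1 := key x hx i hi ei
  have k2 := key y hy j hj ej
  refine ⟨_, _, fun hab => ?_, ⟨i, k1⟩, ⟨j, k2⟩⟩
  rw [hab] at k1
  exact hij (iter_time_inj P _ (k1.trans k2.symm))

theorem no_dbl {ε l c ν : ℝ} {r : Fin 3 → ℕ} (P : Par ε l c) (W : Tow ε l c ν r) {w : ℝ}
    (hw : w ∈ Ico c (c + l)) : ¬ Dbl ε l c ν r w := by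
  have he0 := P.e0; have he1 := P.e1; have hl1 := P.h1; have hl2 := P.h2; have hl3 := P.h3
  intro h
  obtain ⟨a, b, hab, ⟨i, hi⟩, ⟨j, hj⟩⟩ := h.left P W hw (D := c + ε) ⟨by linarith, by linarith⟩ (by
    intro y hy
    rw [(letter_two (x := c + ε)).2 ⟨by linarith, le_rfl⟩]
    intro h
    linarith [(letter_two.1 h).2])
  obtain ⟨a', b', hab', ⟨i', hi'⟩, ⟨j', hj'⟩⟩ := h.left P W hw (D := c + l - 1 + ε)
    ⟨by linarith, by linarith⟩ (by
    intro y hy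
    rw [(letter_one (x := c + l - 1 + ε)).2 ⟨le_rfl, by linarith⟩]
    intro h
    linarith [(letter_one.1 h).1])
  have : a = a' ∨ a = b' ∨ b = a' ∨ b = b' := by omega
  rcases this with rfl | rfl | rfl | rfl
  · exact not_both P _ _ _ hi hi'
  · exact not_both P _ _ _ hi hj'
  · exact not_both P _ _ _ hj hi'
  · exact not_both P _ _ _ hj hj'

theorem scale_iff {l c ν x : ℝ} (h0 : 0 < ν) :
    ν * x ∈ Ico (ν * c) (ν * (c + l)) ↔ x ∈ Ico c (c + l) := by
  simp only [mem_Ico, mul_le_mul_iff_right₀ h0, mul_lt_mul_iff_right₀ h0]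

theorem tow_first {ε l c ν : ℝ} {r : Fin 3 → ℕ} (P : Par ε l c) (W : Tow ε l c ν r) {x : ℝ}
    (hx : x ∈ Ico c (c + l)) {n : ℕ} (hn : 1 ≤ n)
    (h : (T3 ε l c)^[n] (ν * x) ∈ Ico (ν * c) (ν * (c + l)))
    (hm : ∀ m : ℕ, 1 ≤ m → m < n → (T3 ε l c)^[m] (ν * x) ∉ Ico (ν * c) (ν * (c + l))) :
    n = r (letter3 ε l c x) := by
  rcases lt_trichotomy n (r (letter3 ε l c x)) with hlt | heq | hgt
  · exfalso
    have e : (T3 ε l c)^[n] (ν * x) = ν * ((T3 ε l c)^[n] (ν * x) / ν) := by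
      have := W.n0; field_simp
    set y := (T3 ε l c)^[n] (ν * x) / ν
    rw [e, scale_iff W.n0] at h
    exact no_dbl P W (scale_mem P W.n0 W.n1 h)
      ⟨x, hx, y, h, n, 0, by omega, hlt, W.rpos _, e, rfl⟩
  · exact heq
  · exfalso
    refine hm _ (W.rpos _) hgt ?_
    rw [W.ret x hx, scale_iff W.n0]
    exact T3_mem P hx

theorem tow_concl {ε l c ν : ℝ} {r : Fin 3 → ℕ} (P : Par ε l c) (W : Tow ε l c ν r) :
    (∀ x ∈ Set.Ico (ν * c) (ν * (c + l)),
        (∃ n : ℕ, 1 ≤ n ∧ (T3 ε l c)^[n] x ∈ Set.Ico (ν * c) (ν * (c + l))) ∧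
        ∀ n : ℕ, 1 ≤ n → (T3 ε l c)^[n] x ∈ Set.Ico (ν * c) (ν * (c + l)) →
          (∀ m : ℕ, 1 ≤ m → m < n → (T3 ε l c)^[m] x ∉ Set.Ico (ν * c) (ν * (c + l))) →
          (T3 ε l c)^[n] x = ν * T3 ε l c (x / ν)) ∧
      (returnNames ε l c (Set.Ico (ν * c) (ν * (c + l)))).ncard = 3 := by
  have hν := W.n0
  have hret : ∀ x ∈ Ico c (c + l),
      (T3 ε l c)^[r (letter3 ε l c x)] (ν * x) ∈ Ico (ν * c) (ν * (c + l)) := by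
    intro x hx
    rw [W.ret x hx, scale_iff hν]
    exact T3_mem P hx
  have hsc : ∀ z : ℝ, ∃ x, z = ν * x := fun z => ⟨z / ν, by field_simp⟩
  constructor
  · intro z hz
    obtain ⟨x, rfl⟩ := hsc z
    rw [scale_iff hν] at hz
    refine ⟨⟨_, W.rpos _, hret x hz⟩, fun n h1 h2 h3 => ?_⟩
    rw [tow_first P W hz h1 h2 h3, W.ret x hz, mul_div_cancel_left₀ _ hν.ne']
  · have : returnNames ε l c (Set.Ico (ν * c) (ν * (c + l))) =
        (fun a => cw ε l c (r a) (ν * dpt ε l c a)) '' univ := by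
      ext w
      constructor
      · rintro ⟨z, hz, n, h1, h2, h3, rfl⟩
        obtain ⟨x, rfl⟩ := hsc z
        rw [scale_iff hν] at hz
        have := tow_first P W hz h1 h2 h3
        subst this
        refine ⟨letter3 ε l c x, mem_univ _, ?_⟩
        exact cw_eq.2 (same_symm (W.same x hz _ (dpt_mem P _) (dpt_letter P _).symm))
      · rintro ⟨a, -, rfl⟩
        have hd := dpt_mem P a
        classical
        have hex : ∃ n, 1 ≤ n ∧ (T3 ε l c)^[n] (ν * dpt ε l c a) ∈ Ico (ν * c) (ν * (c + l)) :=
          ⟨_, W.rpos _, hret _ hd⟩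
        have hm : ∀ m : ℕ, 1 ≤ m → m < Nat.find hex →
            (T3 ε l c)^[m] (ν * dpt ε l c a) ∉ Ico (ν * c) (ν * (c + l)) :=
          fun m hm hm' hh => Nat.find_min hex hm' ⟨hm, hh⟩
        have e := tow_first P W hd (Nat.find_spec hex).1 (Nat.find_spec hex).2 hm
        rw [dpt_letter P] at e
        rw [e] at hm
        have := hret _ hd
        rw [dpt_letter P] at this
        exact ⟨_, (scale_iff hν).2 hd, r a, W.rpos _, this, hm, rfl⟩
    rw [this, Set.ncard_image_of_injective, Set.ncard_univ, Nat.card_eq_fintype_card,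
      Fintype.card_fin]
    intro a b hab
    apply stp_inj P
    have h : ∀ a, ((cw ε l c (r a) (ν * dpt ε l c a)).map (stp ε)).sum = ν * stp ε a := by
      intro a
      have := W.ret _ (dpt_mem P a)
      rw [dpt_letter P, T3_eq, dpt_letter P] at this
      rw [cw_sum, this]
      ring
    have h2 := h a
    simp only at hab
    rw [hab, h b] at h2
    exact mul_left_cancel₀ hν.ne' h2.symm

theorem tow_of_adm {ε l c ν : ℝ} {u : ℤ → Fin 3} {t : ℤ → ℝ} {k : ℤ → ℤ} (P : Par ε l c)
    (O : Orb ε l c u t) (A : Adm u k) (n0 : 0 < ν) (n1 : ν < 1)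
    (hk : ∀ n, t (k n) = ν * t n) : ∃ r, Tow ε l c ν r := by
  choose N hN using O.letters P
  have hr : ∃ r : Fin 3 → ℕ, ∀ n, k (n + 1) = k n + r (u n) := by
    refine ⟨fun a => (k (N a + 1) - k (N a)).toNat, fun n => ?_⟩
    have hl := A.len n (N (u n)) (hN _).symm
    have : k n < k (n + 1) := A.mono (by omega)
    simp only
    omega
  obtain ⟨r, hr⟩ := hr
  have key : ∀ x ∈ Ico c (c + l),
      SameCode ε l c (r (letter3 ε l c x)) (ν * x) (ν * t (N (letter3 ε l c x))) ∧
      (T3 ε l c)^[r (letter3 ε l c x)] (ν * x) = ν * T3 ε l c x := by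
    intro x hx
    set a := letter3 ε l c x with ha
    have ht : Tendsto (fun y => ν * y) (𝓝[≥] x) (𝓝[≥] (ν * x)) := by
      apply tendsto_nhdsWithin_of_tendsto_nhds_of_eventually_within
      · apply tendsto_nhdsWithin_of_tendsto_nhds
        have : Continuous (fun y => ν * y) := by fun_prop
        exact this.tendsto x
      · filter_upwards [self_mem_nhdsWithin] with y hy
        exact mul_le_mul_of_nonneg_left hy n0.le
    have hev := (ht.eventually (same_right ε l c (r a) (ν * x))).and (letter_right ε l c x)
    obtain ⟨β, hβ, hs⟩ := mem_nhdsGE_iff_exists_Ico_subset.1 hev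
    obtain ⟨n, hn1, hn2⟩ := O.dense P (α := x) (β := min (c + l) β)
      (lt_min hx.2 hβ) hx.1 (min_le_left _ _)
    rw [lt_min_iff] at hn2
    obtain ⟨s1, s2⟩ := hs (show t n ∈ Ico x β from ⟨hn1.le, hn2.2⟩)
    have un : u n = a := by rw [O.code, s2]
    constructor
    · have h2 : SameCode ε l c (r a) (ν * t n) (ν * t (N a)) := by
        rw [← hk, ← hk, O.same]
        intro i hi
        refine A.code _ _ (by rw [un, hN]) i (by omega) ?_
        rw [hr, un]; omega
      exact fun i hi => (s1 i hi).trans (h2 i hi)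
    · have e := same_trans s1 (r a) le_rfl
      have e2 := hr n
      rw [un] at e2
      rw [← hk, ← O.iter, ← e2, hk, hk, O.nxt, T3_eq, ← O.code, un] at e
      rw [T3_eq, ← ha]
      linarith
  refine ⟨r, n0, n1, fun a => ?_, fun x hx y hy hxy => ?_, fun x hx => (key x hx).2⟩
  · have := hr (N a)
    have h2 : k (N a) < k (N a + 1) := A.mono (by omega)
    rw [hN] at this
    omega
  · have h1 := (key x hx).1
    have h2 := (key y hy).1
    rw [← hxy] at h2
    exact fun i hi => (h1 i hi).trans (h2 i hi).symm

theorem forward {ε l c : ℝ} {u : ℤ → Fin 3} {t : ℤ → ℝ} (P : Par ε l c)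
    (O : Orb ε l c u t) {φ : Fin 3 → List (Fin 3)} (hne : ∀ a, φ a ≠ [])
    (hprim : IsPrimitiveSubst φ) (hfix : IsFixedPointSubstZ φ u) :
    ∃ ν ∈ Set.Ioo (0 : ℝ) 1,
      (∀ x ∈ Set.Ico (ν * c) (ν * (c + l)),
        (∃ n : ℕ, 1 ≤ n ∧ (T3 ε l c)^[n] x ∈ Set.Ico (ν * c) (ν * (c + l))) ∧
        ∀ n : ℕ, 1 ≤ n → (T3 ε l c)^[n] x ∈ Set.Ico (ν * c) (ν * (c + l)) →
          (∀ m : ℕ, 1 ≤ m → m < n → (T3 ε l c)^[m] x ∉ Set.Ico (ν * c) (ν * (c + l))) →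
          (T3 ε l c)^[n] x = ν * T3 ε l c (x / ν)) ∧
      (returnNames ε l c (Set.Ico (ν * c) (ν * (c + l)))).ncard = 3 := by
  have he0 := P.e0; have he1 := P.e1; have hl1 := P.h1; have hl2 := P.h2; have hl3 := P.h3
  have hc0 := P.c0; have hc1 := P.c1
  obtain ⟨k, hk1, hk2, hk3, hk4⟩ := hfix
  have A : Adm u k := by
    refine ⟨hk1, hk2, fun m n h => ?_, fun m n h i hi hi' => ?_⟩
    · rw [hk3 m, hk3 n, h]; ring
    · rw [hk3 m] at hi'
      lift i to ℕ using hi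
      have h1 : i < (φ (u m)).length := by omega
      have h2 : i < (φ (u n)).length := by rw [← h]; exact h1
      rw [hk4 m i h1, hk4 n i h2]
      simp [h]
  obtain ⟨ν, hν⟩ := exists_nu P O A
  have hν2 : ∀ n, t (k (k n)) = ν ^ 2 * t n := fun n => by rw [hν, hν]; ring
  have hν0 : ν ≠ 0 := by
    rintro rfl
    have h1 := hν 1
    have h2 : t (k 1) = t (k 0) := by rw [h1, hν 0]; simp
    have := A.mono.injective (O.inj P h2)
    omega
  have hpos : 0 < ν ^ 2 := by positivity
  have hle : ν ^ 2 ≤ 1 := by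
    by_contra hgt
    push Not at hgt
    have : (c + l) / ν ^ 2 < c + l := div_lt_self hc1 hgt
    have h0 : 0 < (c + l) / ν ^ 2 := by positivity
    obtain ⟨n, h1, h2⟩ := O.dense P this (by linarith) le_rfl
    rw [div_lt_iff₀ hpos] at h1
    have := (O.mem (k (k n))).2
    rw [hν2] at this
    linarith
  have hne1 : ν ^ 2 ≠ 1 := by
    intro h1
    have kk : ∀ n, k (k n) = n := fun n => O.inj P (by rw [hν2, h1, one_mul])
    have kge : ∀ n : ℕ, (n : ℤ) ≤ k n := by
      intro n
      induction n with
      | zero => simp [A.z]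
      | succ n ih =>
        have := A.mono (show (n : ℤ) < n + 1 by omega)
        push_cast
        omega
    have keq : ∀ n : ℕ, k n = n := by
      intro n
      have h2 := A.mono.monotone (kge n)
      rw [kk] at h2
      exact le_antisymm h2 (kge n)
    have len1 : ∀ a, (φ a).length = 1 := by
      intro a
      obtain ⟨n, rfl⟩ := O.letters P a
      have h2 := hk3 n
      have h3 := keq (n + 1)
      push_cast at h3
      rw [h3, keq] at h2
      omega
    obtain ⟨n, hn, hp⟩ := hprim
    have hlen : ∀ w : List (Fin 3), (substWord φ w).length = w.length := by
      intro w
      simp [substWord, List.length_flatMap, len1]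
    have hlen' : ∀ n (w : List (Fin 3)), ((substWord φ)^[n] w).length = w.length := by
      intro n w
      induction n with
      | zero => rfl
      | succ n ih => rw [Function.iterate_succ_apply', hlen, ih]
    obtain ⟨b, hb⟩ := List.length_eq_one_iff.1 (hlen' n [0])
    have p0 := hp 0 0
    have p1 := hp 0 1
    rw [hb] at p0 p1
    simp at p0 p1
    rw [← p0] at p1
    exact absurd p1 (by decide)
  have hlt := lt_of_le_of_ne hle hne1
  obtain ⟨r, W⟩ := tow_of_adm P O A.comp hpos hlt hν2
  exact ⟨ν ^ 2, ⟨hpos, hlt⟩, tow_concl P W⟩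

theorem tow_of_P {ε l c ν : ℝ} (P : Par ε l c) (n0 : 0 < ν) (n1 : ν < 1)
    (hP1 : ∀ x ∈ Set.Ico (ν * c) (ν * (c + l)),
        (∃ n : ℕ, 1 ≤ n ∧ (T3 ε l c)^[n] x ∈ Set.Ico (ν * c) (ν * (c + l))) ∧
        ∀ n : ℕ, 1 ≤ n → (T3 ε l c)^[n] x ∈ Set.Ico (ν * c) (ν * (c + l)) →
          (∀ m : ℕ, 1 ≤ m → m < n → (T3 ε l c)^[m] x ∉ Set.Ico (ν * c) (ν * (c + l))) →
          (T3 ε l c)^[n] x = ν * T3 ε l c (x / ν))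
    (hP2 : (returnNames ε l c (Set.Ico (ν * c) (ν * (c + l)))).ncard = 3) :
    ∃ r, Tow ε l c ν r := by
  have hR : ∀ x ∈ Ico c (c + l), ∃ n : ℕ, 1 ≤ n ∧ (T3 ε l c)^[n] (ν * x) = ν * T3 ε l c x ∧
      cw ε l c n (ν * x) ∈ returnNames ε l c (Set.Ico (ν * c) (ν * (c + l))) := by
    intro x hx
    classical
    obtain ⟨h1, h2⟩ := hP1 (ν * x) ((scale_iff n0).2 hx)
    have hs := Nat.find_spec h1
    have hm : ∀ m : ℕ, 1 ≤ m → m < Nat.find h1 →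
        (T3 ε l c)^[m] (ν * x) ∉ Ico (ν * c) (ν * (c + l)) :=
      fun m hm hm' hh => Nat.find_min h1 hm' ⟨hm, hh⟩
    have h3 := h2 _ hs.1 hs.2 hm
    rw [mul_div_cancel_left₀ _ n0.ne'] at h3
    exact ⟨Nat.find h1, hs.1, h3, ν * x, (scale_iff n0).2 hx, _, hs.1, hs.2, hm, rfl⟩
  choose! R R1 R2 R3 using hR
  have hsum : ∀ x ∈ Ico c (c + l),
      ((cw ε l c (R x) (ν * x)).map (stp ε)).sum = ν * stp ε (letter3 ε l c x) := by
    intro x hx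
    rw [cw_sum, R2 x hx, T3_eq]; ring
  have hlet : ∀ x ∈ Ico c (c + l), ∀ y ∈ Ico c (c + l),
      cw ε l c (R x) (ν * x) = cw ε l c (R y) (ν * y) → letter3 ε l c x = letter3 ε l c y := by
    intro x hx y hy h
    have h1 := hsum x hx
    rw [h, hsum y hy] at h1
    exact (stp_inj P (mul_left_cancel₀ n0.ne' h1)).symm
  let f : Fin 3 → List (Fin 3) := fun a => cw ε l c (R (dpt ε l c a)) (ν * dpt ε l c a)
  have hf : Function.Injective f := by
    intro a b hab
    have := hlet _ (dpt_mem P a) _ (dpt_mem P b) hab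
    rwa [dpt_letter P, dpt_letter P] at this
  have hfin : (returnNames ε l c (Set.Ico (ν * c) (ν * (c + l)))).Finite :=
    Set.finite_of_ncard_ne_zero (by rw [hP2]; norm_num)
  have hS : f '' univ = returnNames ε l c (Set.Ico (ν * c) (ν * (c + l))) := by
    apply Set.eq_of_subset_of_ncard_le _ _ hfin
    · rintro _ ⟨a, -, rfl⟩
      exact R3 _ (dpt_mem P a)
    · rw [hP2, Set.ncard_image_of_injective _ hf, Set.ncard_univ, Nat.card_eq_fintype_card,
        Fintype.card_fin]
  have key : ∀ x ∈ Ico c (c + l), cw ε l c (R x) (ν * x) = f (letter3 ε l c x) := by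
    intro x hx
    have := R3 x hx
    rw [← hS] at this
    obtain ⟨a, -, ha⟩ := this
    have h2 := hlet _ (dpt_mem P a) x hx ha
    rw [dpt_letter P] at h2
    rw [← h2, ha]
  have hRR : ∀ x ∈ Ico c (c + l), R x = R (dpt ε l c (letter3 ε l c x)) := by
    intro x hx
    have := congrArg List.length (key x hx)
    simpa [f, cw] using this
  refine ⟨fun a => R (dpt ε l c a), n0, n1, fun a => R1 _ (dpt_mem P a),
    fun x hx y hy hxy => ?_, fun x hx => ?_⟩
  · have h1 := key x hx
    have h2 := key y hy
    rw [hRR x hx] at h1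
    rw [hRR y hy, ← hxy] at h2
    exact cw_eq.1 (h1.trans h2.symm)
  · rw [← hRR x hx]
    exact R2 x hx

theorem tow_subst {ε l c ν : ℝ} {r : Fin 3 → ℕ} (P : Par ε l c) (W : Tow ε l c ν r) {x : ℝ}
    (hx : x ∈ Ico c (c + l)) (n : ℕ) :
    ∃ K, substWord (fun a => cw ε l c (r a) (ν * dpt ε l c a)) (cw ε l c n x) =
      cw ε l c K (ν * x) ∧ (T3 ε l c)^[K] (ν * x) = ν * (T3 ε l c)^[n] x := by
  induction n with
  | zero => exact ⟨0, by simp [cw, substWord], by simp⟩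
  | succ n ih =>
    obtain ⟨K, h1, h2⟩ := ih
    have hm := iter_mem P hx n
    set y := (T3 ε l c)^[n] x with hy
    refine ⟨K + r (letter3 ε l c y), ?_, ?_⟩
    · rw [cw_succ, cw_add, h2, ← h1, ← hy]
      simp only [substWord, List.flatMap_append, List.flatMap_singleton]
      congr 1
      exact cw_eq.2 (same_symm (W.same y hm _ (dpt_mem P _) (dpt_letter P _).symm))
    · rw [add_comm, Function.iterate_add_apply, h2, W.ret y hm, Function.iterate_succ_apply', hy]

theorem tow_prim {ε l c ν : ℝ} {r : Fin 3 → ℕ} (P : Par ε l c) (W : Tow ε l c ν r) :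
    IsPrimitiveSubst (fun a => cw ε l c (r a) (ν * dpt ε l c a)) := by
  have he0 := P.e0; have he1 := P.e1; have hl1 := P.h1; have hl2 := P.h2; have hl3 := P.h3
  have hc0 := P.c0; have hc1 := P.c1
  have hpow : ∀ x ∈ Ico c (c + l), ∀ j : ℕ, ν ^ j * x ∈ Ico c (c + l) ∧
      ∃ K, (substWord (fun a => cw ε l c (r a) (ν * dpt ε l c a)))^[j] [letter3 ε l c x] =
      cw ε l c K (ν ^ j * x) ∧ (T3 ε l c)^[K] (ν ^ j * x) = ν ^ j * T3 ε l c x := by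
    intro x hx j
    induction j with
    | zero => exact ⟨by simpa using hx, 1, by simp [cw], by simp⟩
    | succ j ih =>
      obtain ⟨hm, K, h1, h2⟩ := ih
      obtain ⟨K', g1, g2⟩ := tow_subst P W hm K
      have e : ν ^ (j + 1) * x = ν * (ν ^ j * x) := by ring
      rw [e]
      refine ⟨scale_mem P W.n0 W.n1 hm, K', ?_, ?_⟩
      · rw [Function.iterate_succ_apply', h1, g1]
      · rw [g2, h2]; ring
  have hhit : ∀ b : Fin 3, ∃ N : ℕ, ∀ x ∈ Ico c (c + l), ∃ m ≤ N,
      letter3 ε l c ((T3 ε l c)^[m] x) = b := by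
    intro b
    fin_cases b
    · obtain ⟨N, hN⟩ := unif_min P (α := c) (β := c + l - 1 + ε) (by linarith) le_rfl (by linarith)
      refine ⟨N, fun x hx => ?_⟩
      obtain ⟨m, hm, h⟩ := hN x hx
      exact ⟨m, hm, letter_zero.2 h.2⟩
    · obtain ⟨N, hN⟩ := unif_min P (α := c + l - 1 + ε) (β := c + ε) (by linarith) (by linarith)
        (by linarith)
      refine ⟨N, fun x hx => ?_⟩
      obtain ⟨m, hm, h⟩ := hN x hx
      exact ⟨m, hm, letter_one.2 ⟨h.1.le, h.2⟩⟩
    · obtain ⟨N, hN⟩ := unif_min P (α := c + ε) (β := c + l) (by linarith) (by linarith) le_rfl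
      refine ⟨N, fun x hx => ?_⟩
      obtain ⟨m, hm, h⟩ := hN x hx
      exact ⟨m, hm, letter_two.2 ⟨by linarith [h.1], h.1.le⟩⟩
  choose N hN using hhit
  obtain ⟨M, hM⟩ : ∃ M, ∀ b, N b ≤ M := ⟨Finset.univ.sup N, fun b => Finset.le_sup (Finset.mem_univ b)⟩
  obtain ⟨δ, hδ, hgap⟩ := iter_gap P M
  obtain ⟨j, hj⟩ := exists_pow_lt_of_lt_one hδ W.n1
  have hj' : ν ^ (j + 1) < δ := by
    have : 0 < ν ^ j := pow_pos W.n0 j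
    rw [pow_succ]
    nlinarith [W.n0, W.n1]
  refine ⟨j + 1, by omega, fun a b => ?_⟩
  have hd := dpt_mem P a
  obtain ⟨hm, K, h1, h2⟩ := hpow _ hd (j + 1)
  rw [dpt_letter P] at h1
  rw [h1]
  have hνp : 0 < ν ^ (j + 1) := pow_pos W.n0 _
  have hK : M < K := by
    by_contra hle
    push Not at hle
    rcases Nat.eq_zero_or_pos K with rfl | hKp
    · simp only [Function.iterate_zero, id] at h2
      have := mul_left_cancel₀ hνp.ne' h2
      exact iter_ne P (n := 1) le_rfl (dpt ε l c a) (by simpa using this.symm)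
    · have h3 := hgap (ν ^ (j + 1) * dpt ε l c a) K hKp hle
      rw [h2, ← mul_sub, abs_mul, abs_of_pos hνp] at h3
      have h4 : |T3 ε l c (dpt ε l c a) - dpt ε l c a| ≤ 1 := by
        have := T3_mem P hd
        rw [abs_le]; constructor <;> linarith [this.1, this.2, hd.1, hd.2]
      nlinarith
  obtain ⟨m, hm1, hm2⟩ := hN b _ hm
  unfold cw
  rw [List.mem_ofFn]
  exact ⟨⟨m, by have := hM b; omega⟩, hm2⟩

theorem backward {ε l c ν : ℝ} {u : ℤ → Fin 3} {t : ℤ → ℝ} (P : Par ε l c)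
    (O : Orb ε l c u t) (n0 : 0 < ν) (n1 : ν < 1)
    (hP1 : ∀ x ∈ Set.Ico (ν * c) (ν * (c + l)),
        (∃ n : ℕ, 1 ≤ n ∧ (T3 ε l c)^[n] x ∈ Set.Ico (ν * c) (ν * (c + l))) ∧
        ∀ n : ℕ, 1 ≤ n → (T3 ε l c)^[n] x ∈ Set.Ico (ν * c) (ν * (c + l)) →
          (∀ m : ℕ, 1 ≤ m → m < n → (T3 ε l c)^[m] x ∉ Set.Ico (ν * c) (ν * (c + l))) →
          (T3 ε l c)^[n] x = ν * T3 ε l c (x / ν))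
    (hP2 : (returnNames ε l c (Set.Ico (ν * c) (ν * (c + l)))).ncard = 3) :
    ∃ φ : Fin 3 → List (Fin 3), (∀ a, φ a ≠ []) ∧ IsPrimitiveSubst φ ∧
        IsFixedPointSubstZ φ u := by
  obtain ⟨r, W⟩ := tow_of_P P n0 n1 hP1 hP2
  have hlen : ∀ a, (cw ε l c (r a) (ν * dpt ε l c a)).length = r a := fun a => by simp [cw]
  refine ⟨fun a => cw ε l c (r a) (ν * dpt ε l c a), fun a h => ?_, tow_prim P W, ?_⟩
  · have := hlen a
    have h3 := W.rpos a
    simp only at h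
    rw [h] at this
    simp at this
    omega
  have hret : ∀ n, (T3 ε l c)^[r (u n)] (ν * t n) = ν * t (n + 1) := fun n => by
    rw [O.code, W.ret _ (O.mem n), O.nxt]
  have hex : ∀ n, ∃ m, t m = ν * t n := by
    intro n
    induction n with
    | zero => exact ⟨0, by simp [O.t0]⟩
    | succ n ih =>
      obtain ⟨m, hm⟩ := ih
      exact ⟨m + r (u n), by rw [O.iter, hm, hret]⟩
    | pred n ih =>
      obtain ⟨m, hm⟩ := ih
      refine ⟨m - r (u (-n - 1)), ?_⟩
      apply iter_inj P (O.mem _) (scale_mem P n0 n1 (O.mem _)) (r (u (-n - 1)))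
      rw [hret, ← O.iter, sub_add_cancel, sub_add_cancel, hm]
  choose k hk using hex
  have hstep : ∀ n, k (n + 1) = k n + r (u n) := by
    intro n
    apply O.inj P
    rw [hk, O.iter, hk, hret]
  refine ⟨k, strictMono_int_of_lt_succ fun n => ?_, O.inj P (by rw [hk, O.t0]; simp),
    fun n => by rw [hlen, hstep], fun n i h => ?_⟩
  · have := W.rpos (u n)
    rw [hstep]; omega
  · simp only [hlen] at h
    have hs := W.same (t n) (O.mem n) _ (dpt_mem P (u n)) (by rw [dpt_letter P, O.code])
    rw [← O.code] at hs
    rw [O.code, O.iter, hk, hs i h]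
    simp [cw]

theorem threeIet_subst_invariant_iff_returnInterval (ε l c : ℝ) (u : ℤ → Fin 3)
    (hε : Irrational ε) (hεm : ε ∈ Set.Ioo (0 : ℝ) 1)
    (hl₁ : max ε (1 - ε) < l) (hl₂ : l < 1) (hc₁ : c ≤ 0) (hc₂ : 0 < c + l)
    (hnd : l ∉ Zbr ε) (hu : IsThreeIetWord ε l c u) :
    (∃ φ : Fin 3 → List (Fin 3), (∀ a, φ a ≠ []) ∧ IsPrimitiveSubst φ ∧
        IsFixedPointSubstZ φ u) ↔
    ∃ ν ∈ Set.Ioo (0 : ℝ) 1,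
      -- P1: the first return map of J = [νc, ν(c+l)) is homothetic with T
      (∀ x ∈ Set.Ico (ν * c) (ν * (c + l)),
        (∃ n : ℕ, 1 ≤ n ∧ (T3 ε l c)^[n] x ∈ Set.Ico (ν * c) (ν * (c + l))) ∧
        ∀ n : ℕ, 1 ≤ n → (T3 ε l c)^[n] x ∈ Set.Ico (ν * c) (ν * (c + l)) →
          (∀ m : ℕ, 1 ≤ m → m < n → (T3 ε l c)^[m] x ∉ Set.Ico (ν * c) (ν * (c + l))) →
          (T3 ε l c)^[n] x = ν * T3 ε l c (x / ν)) ∧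
      -- P2: the set of return names defined by J has exactly three elements
      (returnNames ε l c (Set.Ico (ν * c) (ν * (c + l)))).ncard = 3 := by
  have P : Par ε l c := ⟨hε, hεm.1, hεm.2, (le_max_left _ _).trans_lt hl₁,
    (le_max_right _ _).trans_lt hl₁, hl₂, hc₁, hc₂, hnd⟩
  obtain ⟨t, h0, h1, h2, h3⟩ := hu
  have O : Orb ε l c u t := ⟨h0, h1, h2, h3⟩
  constructor
  · rintro ⟨φ, hne, hprim, hfix⟩
    exact forward P O hne hprim hfix
  · rintro ⟨ν, hν, hP1, hP2⟩
    exact backward P O hν.1 hν.2 hP1 hP2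
end

section
/- Let ε be an irrational real number, let M be a 3×3 matrix with integer entries, and let Λ, Λ′ be real numbers with Λ + Λ′ ∈ ℤ, Λ·Λ′ ∈ {1, −1}, and M · (1−ε, 1−2ε, −ε)ᵀ = Λ′ · (1−ε, 1−2ε, −ε)ᵀ. Then Λ·ℤ[ε] = Λ′·ℤ[ε] = ℤ[ε], where Λ·ℤ[ε] := {Λz : z ∈ ℤ[ε]}. -/
theorem eigenvalue_preserves_Zbr (ε : ℝ) (hε : Irrational ε)
    (M : Matrix (Fin 3) (Fin 3) ℤ) (Λ Λ' : ℝ)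
    (hsum : ∃ m : ℤ, Λ + Λ' = (m : ℝ)) (hprod : Λ * Λ' = 1 ∨ Λ * Λ' = -1)
    (heig : (M.map (Int.cast : ℤ → ℝ)).mulVec ![1 - ε, 1 - 2 * ε, -ε]
      = Λ' • ![1 - ε, 1 - 2 * ε, -ε]) :
    (fun z => Λ * z) '' Zbr ε = Zbr ε ∧ (fun z => Λ' * z) '' Zbr ε = Zbr ε := by
  obtain ⟨m, hm⟩ := hsum
  have h0 := congrFun heig 0
  have h2 := congrFun heig 2
  simp [Matrix.mulVec, dotProduct, Fin.sum_univ_three] at h0 h2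
  have e2 : ∃ a b : ℤ, Λ' * ε = a + b * ε :=
    ⟨-(M 2 0 + M 2 1), M 2 0 + 2 * M 2 1 + M 2 2, by push_cast; linarith⟩
  obtain ⟨c, d, hcd⟩ := e2
  have e1 : ∃ a b : ℤ, Λ' = a + b * ε :=
    ⟨M 0 0 + M 0 1 + c, -(M 0 0 + 2 * M 0 1 + M 0 2) + d, by push_cast; linarith⟩
  obtain ⟨a, b, hab⟩ := e1
  have H' : ∀ z ∈ Zbr ε, Λ' * z ∈ Zbr ε := by
    rintro z ⟨x, y, rfl⟩
    refine ⟨x * a + y * c, x * b + y * d, ?_⟩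
    push_cast
    linear_combination (x : ℝ) * hab + (y : ℝ) * hcd
  have H : ∀ z ∈ Zbr ε, Λ * z ∈ Zbr ε := by
    intro z hz
    obtain ⟨p, q, hpq⟩ := H' z hz
    obtain ⟨x, y, rfl⟩ := hz
    refine ⟨m * x - p, m * y - q, ?_⟩
    push_cast
    linear_combination ((x : ℝ) + y * ε) * hm - hpq
  have N : ∀ z ∈ Zbr ε, -z ∈ Zbr ε := by
    rintro z ⟨x, y, rfl⟩
    exact ⟨-x, -y, by push_cast; ring⟩
  constructor
  · apply Set.Subset.antisymm
    · rintro _ ⟨z, hz, rfl⟩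
      exact H z hz
    · intro z hz
      rcases hprod with h | h
      · exact ⟨Λ' * z, H' z hz, by linear_combination z * h⟩
      · exact ⟨-(Λ' * z), N _ (H' z hz), by linear_combination -z * h⟩
  · apply Set.Subset.antisymm
    · rintro _ ⟨z, hz, rfl⟩
      exact H' z hz
    · intro z hz
      rcases hprod with h | h
      · exact ⟨Λ * z, H z hz, by linear_combination z * h⟩
      · exact ⟨-(Λ * z), N _ (H z hz), by linear_combination -z * h⟩
end

section
/- Let ε be a quadratic irrational with conjugate ε′, and let Λ = p + qε with p, q ∈ ℚ, with conjugate Λ′ = p + qε′, satisfy Λ·Λ′ ∈ {1, −1} and Λ·ℤ[ε] = ℤ[ε]. Then for every half-open interval Ω = [c, c+l) with l > 0, Λ · Σ_{ε,−ε′}(Ω) = Σ_{ε,−ε′}(Λ′·Ω), where Λ·S := {Λx : x ∈ S} and Λ′·Ω := {Λ′x : x ∈ Ω}. -/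
/-- The cut-and-project set `Σ_{ε,η}(Ω) = {a + bη : a, b ∈ ℤ, a − bε ∈ Ω}`. -/
def cutProject (ε η : ℝ) (Ω : Set ℝ) : Set ℝ :=
  {x | ∃ a b : ℤ, x = (a : ℝ) + (b : ℝ) * η ∧ (a : ℝ) - (b : ℝ) * ε ∈ Ω}

lemma rat_indep (ε : ℝ) (hε : Irrational ε) (r s : ℚ) (h : (r : ℝ) + (s : ℝ) * ε = 0) :
    r = 0 ∧ s = 0 := by
  have hs : s = 0 := by
    by_contra hs
    have hs' : (s : ℝ) ≠ 0 := by exact_mod_cast hs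
    apply hε
    refine ⟨-r / s, ?_⟩
    push_cast
    field_simp
    linarith
  subst hs
  refine ⟨?_, rfl⟩
  have : (r : ℝ) = 0 := by simpa using h
  exact_mod_cast this

lemma conj_mul_eq (ε ε' : ℝ) (s t p q : ℚ) (hε : Irrational ε)
    (h1 : ε ^ 2 = s * ε - t) (h2 : ε' ^ 2 = s * ε' - t) (a b c d : ℤ)
    (h : ((p : ℝ) + q * ε) * (a + b * ε) = c + d * ε) :
    ((p : ℝ) + q * ε') * (a + b * ε') = c + d * ε' := by
  obtain ⟨e1, e2⟩ := rat_indep ε hε (p * a - q * b * t - c) (p * b + q * a + q * b * s - d) (by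
    push_cast
    linear_combination h - (q : ℝ) * b * h1)
  have e1' : (p : ℝ) * a - q * b * t - c = 0 := by exact_mod_cast e1
  have e2' : (p : ℝ) * b + q * a + q * b * s - d = 0 := by exact_mod_cast e2
  linear_combination (q : ℝ) * b * h2 + e1' + ε' * e2'

theorem unit_scales_cutProject (ε : ℝ) (A B C : ℤ) (hA : A ≠ 0) (hε : Irrational ε)
    (hquad : (A : ℝ) * ε ^ 2 + (B : ℝ) * ε + (C : ℝ) = 0) (p q : ℚ)
    (hunit : ((p : ℝ) + (q : ℝ) * ε) * ((p : ℝ) + (q : ℝ) * (-(B : ℝ) / (A : ℝ) - ε)) = 1 ∨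
             ((p : ℝ) + (q : ℝ) * ε) * ((p : ℝ) + (q : ℝ) * (-(B : ℝ) / (A : ℝ) - ε)) = -1)
    (hZ : (fun z => ((p : ℝ) + (q : ℝ) * ε) * z) '' Zbr ε = Zbr ε) :
    ∀ c l : ℝ, 0 < l →
      (fun x => ((p : ℝ) + (q : ℝ) * ε) * x) ''
          cutProject ε (-(-(B : ℝ) / (A : ℝ) - ε)) (Set.Ico c (c + l))
        = cutProject ε (-(-(B : ℝ) / (A : ℝ) - ε))
            ((fun x => ((p : ℝ) + (q : ℝ) * (-(B : ℝ) / (A : ℝ) - ε)) * x) ''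
              Set.Ico c (c + l)) := by
  intro c l _
  have hA' : (A : ℝ) ≠ 0 := by exact_mod_cast hA
  generalize hE : -(B : ℝ) / (A : ℝ) - ε = ε' at *
  have h1 : ε ^ 2 = ((-B / A : ℚ) : ℝ) * ε - ((C / A : ℚ) : ℝ) := by
    push_cast
    field_simp
    linarith
  have h2 : ε' ^ 2 = ((-B / A : ℚ) : ℝ) * ε' - ((C / A : ℚ) : ℝ) := by
    have hs : ((-B / A : ℚ) : ℝ) = ε + ε' := by
      push_cast
      linarith
    rw [hs] at h1 ⊢
    linarith
  have key := conj_mul_eq ε ε' _ _ p q hε h1 h2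
  obtain ⟨u, hu, huu⟩ : ∃ u : ℤ, ((p : ℝ) + q * ε) * (p + q * ε') = u ∧ (u : ℝ) * u = 1 := by
    rcases hunit with h | h
    · exact ⟨1, by simpa using h, by norm_num⟩
    · exact ⟨-1, by simpa using h, by norm_num⟩
  generalize Set.Ico c (c + l) = Ω
  ext x
  constructor
  · rintro ⟨_, ⟨a, b, rfl, hab⟩, rfl⟩
    have hm : (a : ℝ) - b * ε ∈ Zbr ε := ⟨a, -b, by push_cast; ring⟩
    rw [← hZ] at hm
    obtain ⟨_, ⟨m, n, rfl⟩, hmn⟩ := hm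
    have hmn' : ((p : ℝ) + q * ε) * (m + n * ε) = a - b * ε := hmn
    have k := key m n a (-b) (by push_cast; linarith)
    push_cast at k
    refine ⟨u * m, -(u * n), ?_, _, hab, ?_⟩
    · push_cast
      linear_combination -((p : ℝ) + q * ε) * k + (m + n * ε') * hu
    · push_cast
      linear_combination -((p : ℝ) + q * ε') * hmn' + (m + n * ε) * hu
  · rintro ⟨a, b, rfl, z, hz, hab⟩
    have hab' : ((p : ℝ) + q * ε') * z = a - b * ε := hab
    have hm : ((p : ℝ) + q * ε) * (a - b * ε) ∈ Zbr ε := by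
      rw [← hZ]
      exact ⟨_, ⟨a, -b, by push_cast; ring⟩, rfl⟩
    obtain ⟨m, n, hmn⟩ := hm
    have k := key a (-b) m n (by push_cast; linarith)
    push_cast at k
    have hz' : z = u * (m + n * ε) := by
      linear_combination (u : ℝ) * hmn + u * ((p : ℝ) + q * ε) * hab' - u * z * hu - z * huu
    refine ⟨u * (m + n * ε'), ⟨u * m, -(u * n), by push_cast; ring, ?_⟩, ?_⟩
    · have : ((u * m : ℤ) : ℝ) - ((-(u * n) : ℤ) : ℝ) * ε = z := by
        rw [hz']
        push_cast
        ring
      rwa [this]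
    · show ((p : ℝ) + q * ε) * (u * (m + n * ε')) = a + b * (-ε')
      linear_combination -((p : ℝ) + q * ε) * u * k + u * (a - b * ε') * hu + (a - b * ε') * huu
end
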